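/- Let R be a ring, and let W and X be classes of left R-modules. Suppose 0 → X_1 → X_2 → X_3 → 0 is a short exact sequence with X_1, X_2, X_3 ∈ X, and that there are short exact sequences 0 → X_1 → W_1 → X_1' → 0 and 0 → X_3 → W_3 → X_3' → 0 with W_1, W_3 ∈ W, X_1', X_3' ∈ X, such that Ext^1_R(X_3, W_1) = 0. Then there is an R-module X_2' and a commutative 3×3 diagram with exact rows and columns whose rows are 0 → X_1 → X_2 → X_3 → 0, 0 → W_1 → W_1 ⊕ W_3 → W_3 → 0 and 0 → X_1' → X_2' → X_3' → 0, and whose outer columns are the two given short exact sequences. -/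

import Mathlib

open CategoryTheory CategoryTheory.Limits Opposite
open scoped DirectSum

universe w v u

namespace QuiverGF


section Cat

variable {A : Type u} [Category.{v} A] [Abelian A]

/-- `Ext¹(X,Y) = 0`, expressed as: every short exact sequence `0 → Y → E → X → 0` splits. -/
def ext1Zero (X Y : A) : Prop :=
  ∀ (E : A) (f : Y ⟶ E) (g : E ⟶ X) (w : f ≫ g = 0),
    (ShortComplex.mk f g w).ShortExact → ∃ s : X ⟶ E, s ≫ g = 𝟙 X

/-- `extHigherZero n X Y` encodes `Ext^{n+1}(X,Y) = 0`, defined by dimension shifting along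
short exact sequences `0 → Y → I → Z → 0` with `I` injective. -/
def extHigherZero : ℕ → A → A → Prop
  | 0 => fun X Y => ext1Zero X Y
  | n + 1 => fun X Y => ∀ (I Z : A) (f : Y ⟶ I) (g : I ⟶ Z) (w : f ≫ g = 0),
      Injective I → (ShortComplex.mk f g w).ShortExact → extHigherZero n X Z

/-- The right `Ext¹`-orthogonal class. -/
def rightPerp (S : Set A) : Set A := {Y | ∀ X ∈ S, ext1Zero X Y}

/-- The left `Ext¹`-orthogonal class. -/
def leftPerp (S : Set A) : Set A := {X | ∀ Y ∈ S, ext1Zero X Y}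

/-- `(X, Y)` is a cotorsion pair. -/
structure IsCotorsionPair (X Y : Set A) : Prop where
  right_eq : Y = rightPerp X
  left_eq : X = leftPerp Y

/-- Completeness of a pair of classes: every object admits approximation sequences. -/
def IsCompleteCP (X Y : Set A) : Prop :=
  (∀ M : A, ∃ (YM XM : A) (f : M ⟶ YM) (g : YM ⟶ XM) (w : f ≫ g = 0),
     (ShortComplex.mk f g w).ShortExact ∧ YM ∈ Y ∧ XM ∈ X) ∧
  (∀ M : A, ∃ (YM XM : A) (f : YM ⟶ XM) (g : XM ⟶ M) (w : f ≫ g = 0),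
     (ShortComplex.mk f g w).ShortExact ∧ YM ∈ Y ∧ XM ∈ X)

/-- Heredity: `Ext^i(X,Y) = 0` for all `i ≥ 1`. -/
def IsHereditaryCP (X Y : Set A) : Prop :=
  ∀ M ∈ X, ∀ N ∈ Y, ∀ n : ℕ, extHigherZero n M N

/-- A thick class of objects. -/
structure IsThick (W : Set A) : Prop where
  summand : ∀ Z ∈ W, ∀ (X : A) (i : X ⟶ Z) (r : Z ⟶ X), i ≫ r = 𝟙 X → X ∈ W
  ext_closed : ∀ (S : ShortComplex A), S.ShortExact → S.X₁ ∈ W → S.X₃ ∈ W → S.X₂ ∈ W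
  ker_epi : ∀ (S : ShortComplex A), S.ShortExact → S.X₂ ∈ W → S.X₃ ∈ W → S.X₁ ∈ W
  coker_mono : ∀ (S : ShortComplex A), S.ShortExact → S.X₁ ∈ W → S.X₂ ∈ W → S.X₃ ∈ W

/-- A Hovey triple. -/
structure IsHoveyTriple (C W F : Set A) : Prop where
  thick : IsThick W
  cp1 : IsCotorsionPair C (W ∩ F)
  cp1_complete : IsCompleteCP C (W ∩ F)
  cp2 : IsCotorsionPair (C ∩ W) F
  cp2_complete : IsCompleteCP (C ∩ W) F

/-- A hereditary Hovey triple. -/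
structure IsHereditaryHoveyTriple (C W F : Set A) extends IsHoveyTriple C W F : Prop where
  cp1_hereditary : IsHereditaryCP C (W ∩ F)
  cp2_hereditary : IsHereditaryCP (C ∩ W) F

/-- `f : C ⟶ M` is an `S`-cover of `M`. -/
def IsCover (S : Set A) {C M : A} (f : C ⟶ M) : Prop :=
  C ∈ S ∧ (∀ C' ∈ S, ∀ g : C' ⟶ M, ∃ h : C' ⟶ C, h ≫ f = g) ∧
    (∀ h : C ⟶ C, h ≫ f = f → IsIso h)

/-- `f : M ⟶ E` is an `S`-envelope of `M`. -/
def IsEnvelope (S : Set A) {M E : A} (f : M ⟶ E) : Prop :=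
  E ∈ S ∧ (∀ E' ∈ S, ∀ g : M ⟶ E', ∃ h : E ⟶ E', f ≫ h = g) ∧
    (∀ h : E ⟶ E, f ≫ h = f → IsIso h)

/-- A perfect pair of classes: X-covers and Y-envelopes always exist. -/
def IsPerfectCP (X Y : Set A) : Prop :=
  (∀ M : A, ∃ (C : A) (f : C ⟶ M), IsCover X f) ∧
  (∀ M : A, ∃ (E : A) (f : M ⟶ E), IsEnvelope Y f)

/-- `W` is a cogenerator for `X`. -/
def IsCogenerator (W X : Set A) : Prop :=
  W ⊆ X ∧ ∀ M ∈ X, ∃ (W' X' : A) (f : M ⟶ W') (g : W' ⟶ X') (w : f ≫ g = 0),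
    (ShortComplex.mk f g w).ShortExact ∧ W' ∈ W ∧ X' ∈ X

end Cat

section Quiver

variable (V : Type w) [Quiver.{w} V]

/-- A quiver is left rooted if it has no infinite sequence of arrows `• → • → • → ⋯`. -/
def LeftRooted : Prop := ¬ ∃ f : ℕ → V, ∀ n : ℕ, Nonempty (f n ⟶ f (n + 1))

variable {V}
variable {A : Type u} [Category.{v} A]

/-- A vertex of `V`, seen as an object of the path category. -/
abbrev vtx (i : V) : Paths V := i

section Phi

variable [Abelian A] [HasCoproducts.{w} A]

/-- The canonical morphism `φᵢˣ : ⊕_{a : j ⟶ i} X(j) ⟶ X(i)`. -/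
noncomputable def phi (X : Paths V ⥤ A) (i : V) :
    (∐ fun p : Σ j : V, j ⟶ i => X.obj (vtx p.1)) ⟶ X.obj (vtx i) :=
  Sigma.desc fun p => X.map p.2.toPath

/-- The class `Φ(S)` of representations. -/
noncomputable def PhiClass (S : Set A) : Set (Paths V ⥤ A) :=
  {X | ∀ i : V, Mono (phi X i) ∧ X.obj (vtx i) ∈ S ∧ cokernel (phi X i) ∈ S}

end Phi

/-- The class of representations with all vertex values in `S`. -/
def RepClass (S : Set A) : Set (Paths V ⥤ A) := {X | ∀ i : V, X.obj (vtx i) ∈ S}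

section Psi

variable [Abelian A] [HasProducts.{w} A]

/-- The canonical morphism `ψᵢʸ : Y(i) ⟶ Π_{a : i ⟶ j} Y(j)`. -/
noncomputable def psi (Y : Paths V ⥤ A) (i : V) :
    Y.obj (vtx i) ⟶ ∏ᶜ fun p : Σ j : V, i ⟶ j => Y.obj (vtx p.1) :=
  Pi.lift fun p => Y.map p.2.toPath

/-- The class `Ψ(S)` of representations. -/
noncomputable def PsiClass (S : Set A) : Set (Paths V ⥤ A) :=
  {Y | ∀ i : V, Epi (psi Y i) ∧ Y.obj (vtx i) ∈ S ∧ kernel (psi Y i) ∈ S}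

end Psi

end Quiver




section NcTensor

variable (R : Type u) [Ring R]

variable (E : Type u) [AddCommGroup E] [Module Rᵐᵒᵖ E]
variable (M : Type u) [AddCommGroup M] [Module R M]

/-- The defining relations of the tensor product `E ⊗_R M` of a right `R`-module `E`
and a left `R`-module `M` over a (possibly noncommutative) ring `R`. -/
def ncRel : Submodule ℤ (TensorProduct ℤ E M) :=
  Submodule.span ℤ {z | ∃ (e : E) (r : R) (m : M),
    z = (MulOpposite.op r • e) ⊗ₜ[ℤ] m - e ⊗ₜ[ℤ] (r • m)}

/-- The tensor product `E ⊗_R M` of a right `R`-module `E` and a left `R`-module `M`. -/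
abbrev NcTensor := TensorProduct ℤ E M ⧸ ncRel R E M

/-- The canonical generator `e ⊗ m` of `E ⊗_R M`. -/
noncomputable def NcTensor.tmul (e : E) (m : M) : NcTensor R E M :=
  Submodule.Quotient.mk (e ⊗ₜ[ℤ] m)

variable {E M}
variable {E' : Type u} [AddCommGroup E'] [Module Rᵐᵒᵖ E']
variable {M' : Type u} [AddCommGroup M'] [Module R M']

/-- Functoriality of the tensor product. -/
noncomputable def NcTensor.map (f : E →ₗ[Rᵐᵒᵖ] E') (g : M →ₗ[R] M') :
    NcTensor R E M →ₗ[ℤ] NcTensor R E' M' :=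
  Submodule.mapQ _ _
    (TensorProduct.map f.toAddMonoidHom.toIntLinearMap g.toAddMonoidHom.toIntLinearMap)
    (by
      refine Submodule.span_le.2 ?_
      rintro z ⟨e, r, m, rfl⟩
      refine Submodule.mem_comap.2 (Submodule.subset_span ?_)
      exact ⟨f e, r, g m,
        (map_sub (TensorProduct.map f.toAddMonoidHom.toIntLinearMap
          g.toAddMonoidHom.toIntLinearMap) _ _).trans
        (congrArg₂ (fun x y => x ⊗ₜ[ℤ] g m - f e ⊗ₜ[ℤ] y)
          (map_smul f (MulOpposite.op r) e) (map_smul g r m))⟩)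

@[simp] lemma NcTensor.map_tmul (f : E →ₗ[Rᵐᵒᵖ] E') (g : M →ₗ[R] M') (e : E) (m : M) :
    NcTensor.map R f g (NcTensor.tmul R E M e m) = NcTensor.tmul R E' M' (f e) (g m) := by
  rfl

end NcTensor

section ModuleClasses

variable (R : Type u) [Ring R]

/-- A left `R`-module is flat if tensoring with it preserves injections of right `R`-modules. -/
def IsFlatModule (M : ModuleCat.{u} R) : Prop :=
  ∀ (E E' : ModuleCat.{u} Rᵐᵒᵖ) (f : E ⟶ E'), Function.Injective f →
    Function.Injective (NcTensor.map R (f.hom : ↑E →ₗ[Rᵐᵒᵖ] ↑E') (LinearMap.id (M := ↑M)))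

/-- Gorenstein flat left `R`-modules: cycles of exact complexes of flat modules which stay
exact after tensoring with any injective right `R`-module. -/
def IsGorensteinFlatModule (M : ModuleCat.{u} R) : Prop :=
  ∃ (F : ℤ → ModuleCat.{u} R) (d : ∀ n : ℤ, F n ⟶ F (n + 1)),
    (∀ n, IsFlatModule R (F n)) ∧
    (∀ n, Function.Exact (d n) (d (n + 1))) ∧
    Nonempty (↑M ≃ₗ[R] ↥(LinearMap.ker ((d 0).hom : ↑(F 0) →ₗ[R] ↑(F (0 + 1))))) ∧
    ∀ (E : ModuleCat.{u} Rᵐᵒᵖ), Injective E → ∀ n : ℤ,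
      Function.Exact (NcTensor.map R (LinearMap.id (M := ↑E)) ((d n).hom : ↑(F n) →ₗ[R] ↑(F (n + 1))))
        (NcTensor.map R (LinearMap.id (M := ↑E)) ((d (n + 1)).hom : ↑(F (n + 1)) →ₗ[R] ↑(F (n + 1 + 1))))

/-- Projectively coresolved Gorenstein flat left `R`-modules. -/
def IsPGFModule (M : ModuleCat.{u} R) : Prop :=
  ∃ (P : ℤ → ModuleCat.{u} R) (d : ∀ n : ℤ, P n ⟶ P (n + 1)),
    (∀ n, Projective (P n)) ∧
    (∀ n, Function.Exact (d n) (d (n + 1))) ∧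
    Nonempty (↑M ≃ₗ[R] ↥(LinearMap.ker ((d 0).hom : ↑(P 0) →ₗ[R] ↑(P (0 + 1))))) ∧
    ∀ (E : ModuleCat.{u} Rᵐᵒᵖ), Injective E → ∀ n : ℤ,
      Function.Exact (NcTensor.map R (LinearMap.id (M := ↑E)) ((d n).hom : ↑(P n) →ₗ[R] ↑(P (n + 1))))
        (NcTensor.map R (LinearMap.id (M := ↑E)) ((d (n + 1)).hom : ↑(P (n + 1)) →ₗ[R] ↑(P (n + 1 + 1))))

/-- Gorenstein injective objects of an abelian category. -/
def IsGorensteinInjective {A : Type*} [Category A] [Abelian A] (M : A) : Prop :=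
  ∃ (I : ℤ → A) (d : ∀ n : ℤ, I n ⟶ I (n + 1)),
    (∀ n, Injective (I n)) ∧
    (∀ n, ∃ w : d n ≫ d (n + 1) = 0, (ShortComplex.mk (d n) (d (n + 1)) w).Exact) ∧
    Nonempty (M ≅ kernel (d 0)) ∧
    ∀ (E : A), Injective E → ∀ n : ℤ,
      Function.Exact (fun f : E ⟶ I n => f ≫ d n) (fun f : E ⟶ I (n + 1) => f ≫ d (n + 1))

end ModuleClasses



section Char

variable (R : Type u) [Ring R] (G : Type u) [AddCommGroup G]

section Left
variable (M : Type u) [AddCommGroup M] [Module R M]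

/-- Right `R`-action on `Hom_ℤ(M, G)` for a left `R`-module `M`. -/
instance : SMul Rᵐᵒᵖ (M →+ G) :=
  ⟨fun r f => f.comp (DistribMulAction.toAddMonoidHom M r.unop)⟩

@[simp] lemma op_smul_addHom_apply (r : Rᵐᵒᵖ) (f : M →+ G) (m : M) :
    (r • f) m = f (r.unop • m) := rfl

instance charRight : Module Rᵐᵒᵖ (M →+ G) where
  one_smul f := AddMonoidHom.ext fun m => by simp
  mul_smul r s f := AddMonoidHom.ext fun m => by simp [mul_smul]
  smul_zero r := AddMonoidHom.ext fun m => rfl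
  smul_add r f g := AddMonoidHom.ext fun m => rfl
  add_smul r s f := AddMonoidHom.ext fun m => by simp [add_smul]
  zero_smul f := AddMonoidHom.ext fun m => by simp

end Left

section Right
variable (N : Type u) [AddCommGroup N] [Module Rᵐᵒᵖ N]

/-- Left `R`-action on `Hom_ℤ(N, G)` for a right `R`-module `N`. -/
instance : SMul R (N →+ G) :=
  ⟨fun r f => f.comp (DistribMulAction.toAddMonoidHom N (MulOpposite.op r))⟩

@[simp] lemma smul_addHom_apply (r : R) (f : N →+ G) (n : N) :
    (r • f) n = f (MulOpposite.op r • n) := rfl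

instance charLeft : Module R (N →+ G) where
  one_smul f := AddMonoidHom.ext fun n => by simp
  mul_smul r s f := AddMonoidHom.ext fun n => by simp [MulOpposite.op_mul, mul_smul]
  smul_zero r := AddMonoidHom.ext fun n => rfl
  smul_add r f g := AddMonoidHom.ext fun n => rfl
  add_smul r s f := AddMonoidHom.ext fun n => by simp [add_smul]
  zero_smul f := AddMonoidHom.ext fun n => by simp

end Right

section Precomp

variable {R G}
variable {M N : Type u} [AddCommGroup M] [AddCommGroup N] [Module R M] [Module R N]

/-- Precomposition, as an `Rᵐᵒᵖ`-linear map between character modules. -/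
def precompHom (h : M →ₗ[R] N) : (N →+ G) →ₗ[Rᵐᵒᵖ] (M →+ G) where
  toFun f := f.comp h.toAddMonoidHom
  map_add' f g := rfl
  map_smul' r f := AddMonoidHom.ext fun m => by simp [map_smul]

variable {P Q : Type u} [AddCommGroup P] [AddCommGroup Q] [Module Rᵐᵒᵖ P] [Module Rᵐᵒᵖ Q]

/-- Precomposition, as an `R`-linear map between character modules of right modules. -/
def precompHomOp (h : P →ₗ[Rᵐᵒᵖ] Q) : (Q →+ G) →ₗ[R] (P →+ G) where
  toFun f := f.comp h.toAddMonoidHom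
  map_add' f g := rfl
  map_smul' r f := AddMonoidHom.ext fun p => by simp [map_smul]

end Precomp

end Char


section Reps

variable (V : Type u) [Quiver.{u} V] (R : Type u) [Ring R]

/-- The category of representations of the quiver `V` with values in left `R`-modules. -/
abbrev RepL := Paths V ⥤ ModuleCat.{u} R

/-- The category of representations of the opposite quiver with values in right `R`-modules. -/
abbrev RepR := Paths Vᵒᵖ ⥤ ModuleCat.{u} Rᵐᵒᵖ

/-- A vertex of `V`, seen as an object of the path category. -/
abbrev vtx' {V : Type u} [Quiver.{u} V] (i : V) : Paths V := i

/-- The representation `Hom(X, G) ∈ Rep(Qᵒᵖ, Rᵒᵖ)`, given vertexwise by `Hom_ℤ(X(i), G)`. -/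
noncomputable def HomRepObj (X : RepL V R) (G : Type u) [AddCommGroup G] : RepR V R :=
  Paths.lift
    { obj := fun x => ModuleCat.of Rᵐᵒᵖ (↑(X.obj (vtx' x.unop)) →+ G)
      map := fun {x y} a =>
        ModuleCat.ofHom (precompHom (G := G) ((X.map a.unop.toPath).hom : ↑(X.obj (vtx' y.unop)) →ₗ[R] ↑(X.obj (vtx' x.unop))) :
          _ →ₗ[Rᵐᵒᵖ] _) }

/-- The representation `Hom(Y, G) ∈ Rep(Q, R)` for `Y ∈ Rep(Qᵒᵖ, Rᵒᵖ)`. -/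
noncomputable def HomRepObjOp (Y : RepR V R) (G : Type u) [AddCommGroup G] : RepL V R :=
  Paths.lift
    { obj := fun i => ModuleCat.of R (↑(Y.obj (vtx' (op i))) →+ G)
      map := fun {i j} a =>
        ModuleCat.ofHom (precompHomOp (G := G) ((Y.map a.op.toPath).hom : ↑(Y.obj (vtx' (op j))) →ₗ[Rᵐᵒᵖ] ↑(Y.obj (vtx' (op i)))) :
          _ →ₗ[R] _) }

/-- The character representation `X⁺ = Hom(X, ℚ/ℤ)`. -/
noncomputable def charRep (X : RepL V R) : RepR V R :=
  HomRepObj V R X (ULift.{u} (AddCircle (1 : ℚ)))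

section Tensor

variable {V R}

/-- The underlying group of the tensor product of representations before dividing out
by the relations coming from arrows. -/
noncomputable abbrev repTensorBase (Y : RepR V R) (X : RepL V R) : Type u :=
  ⨁ (i : V), NcTensor R (↑(Y.obj (vtx' (op i)))) (↑(X.obj (vtx' i)))

open scoped Classical in
/-- The relations defining the tensor product of representations. -/
noncomputable def repTensorRel (Y : RepR V R) (X : RepL V R) :
    @Submodule ℤ (repTensorBase Y X) _ AddCommGroup.toAddCommMonoid _ :=
  Submodule.span ℤ {z | ∃ (i j : V) (a : i ⟶ j) (y : ↑(Y.obj (vtx' (op j)))) (x : ↑(X.obj (vtx' i))),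
    z = DirectSum.of _ i (NcTensor.tmul R _ _ (Y.map a.op.toPath y) x)
      - DirectSum.of _ j (NcTensor.tmul R _ _ y (X.map a.toPath x))}

/-- The tensor product `Y ⊗_Q X` of representations, for `Y ∈ Rep(Qᵒᵖ, Rᵒᵖ)` and
`X ∈ Rep(Q, R)`. -/
noncomputable abbrev RepTensor (Y : RepR V R) (X : RepL V R) : Type u :=
  repTensorBase Y X ⧸ repTensorRel Y X

open scoped Classical in
/-- Functoriality of the tensor product of representations. -/
noncomputable def RepTensor.map {Y Y' : RepR V R} {X X' : RepL V R}
    (g : Y ⟶ Y') (f : X ⟶ X') : RepTensor Y X →ₗ[ℤ] RepTensor Y' X' :=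
  Submodule.mapQ _ _
    (DirectSum.toModule ℤ V (repTensorBase Y' X') fun i =>
      (DirectSum.lof ℤ V _ i).comp
        (NcTensor.map R ((g.app (vtx' (op i))).hom : _ →ₗ[Rᵐᵒᵖ] _) ((f.app (vtx' i)).hom : _ →ₗ[R] _)))
    (by
      refine Submodule.span_le.2 ?_
      rintro z ⟨i, j, a, y, x, rfl⟩
      refine Submodule.mem_comap.2 ?_
      rw [map_sub, ← DirectSum.lof_eq_of ℤ, ← DirectSum.lof_eq_of ℤ,
        DirectSum.toModule_lof, DirectSum.toModule_lof]
      refine Submodule.subset_span ?_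
      refine ⟨i, j, a, g.app (vtx' (op j)) y, f.app (vtx' i) x, ?_⟩
      have hg : g.app (vtx' (op i)) (Y.map a.op.toPath y)
          = Y'.map a.op.toPath (g.app (vtx' (op j)) y) := by
        have h := g.naturality (a.op.toPath : vtx' (op j) ⟶ vtx' (op i))
        exact LinearMap.congr_fun (congrArg ModuleCat.Hom.hom h) y
      have hf : f.app (vtx' j) (X.map a.toPath x)
          = X'.map a.toPath (f.app (vtx' i) x) := by
        have h := f.naturality (a.toPath : vtx' i ⟶ vtx' j)
        exact LinearMap.congr_fun (congrArg ModuleCat.Hom.hom h) x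
      simp only [LinearMap.comp_apply, NcTensor.map_tmul, DirectSum.lof_eq_of]
      rw [hg, hf])

end Tensor

end Reps




section More

variable (V : Type u) [Quiver.{u} V] (R : Type u) [Ring R]

/-- Cotorsion left `R`-modules. -/
def IsCotorsionModule (M : ModuleCat.{u} R) : Prop :=
  ∀ F : ModuleCat.{u} R, IsFlatModule R F → ext1Zero F M

/-- A right coherent ring: every finitely generated right ideal is finitely presented. -/
def RightCoherent : Prop :=
  ∀ I : Submodule Rᵐᵒᵖ R, I.FG → Module.FinitePresentation Rᵐᵒᵖ ↥I

/-- Flat representations: colimits of projective representations. -/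
def IsFlatRep (Xr : RepL V R) : Prop :=
  ∃ (J : Cat.{u, u}) (D : ↥J ⥤ RepL V R) (c : Limits.Cocone D),
    (∀ j, Projective (D.obj j)) ∧ Nonempty (Limits.IsColimit c) ∧ Nonempty (c.pt ≅ Xr)

/-- Gorenstein flat representations. -/
def IsGorensteinFlatRep (Xr : RepL V R) : Prop :=
  ∃ (F : ℤ → RepL V R) (d : ∀ n : ℤ, F (n + 1) ⟶ F n),
    (∀ n, IsFlatRep V R (F n)) ∧
    (∀ n, ∃ w : d (n + 1) ≫ d n = 0, (ShortComplex.mk (d (n + 1)) (d n) w).Exact) ∧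
    Nonempty (Xr ≅ cokernel (d 0)) ∧
    ∀ (E : RepR V R), Injective E → ∀ n : ℤ,
      Function.Exact (RepTensor.map (𝟙 E) (d (n + 1))) (RepTensor.map (𝟙 E) (d n))

/-- Projectively coresolved Gorenstein flat representations. -/
def IsPGFRep (Xr : RepL V R) : Prop :=
  ∃ (P : ℤ → RepL V R) (d : ∀ n : ℤ, P (n + 1) ⟶ P n),
    (∀ n, Projective (P n)) ∧
    (∀ n, ∃ w : d (n + 1) ≫ d n = 0, (ShortComplex.mk (d (n + 1)) (d n) w).Exact) ∧
    Nonempty (Xr ≅ cokernel (d 0)) ∧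
    ∀ (E : RepR V R), Injective E → ∀ n : ℤ,
      Function.Exact (RepTensor.map (𝟙 E) (d (n + 1))) (RepTensor.map (𝟙 E) (d n))

end More

section Swap

variable (R : Type u) [Ring R]
variable (M : Type u) [AddCommGroup M] [Module R M]
variable (E : Type u) [AddCommGroup E] [Module Rᵐᵒᵖ E]

/-- Relations for the tensor product `M ⊗_{Rᵒᵖ} E` of a right `Rᵒᵖ`-module `M`
and a left `Rᵒᵖ`-module `E`. -/
def ncRel' : Submodule ℤ (TensorProduct ℤ M E) :=
  Submodule.span ℤ {z | ∃ (m : M) (r : R) (e : E),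
    z = (r • m) ⊗ₜ[ℤ] e - m ⊗ₜ[ℤ] (MulOpposite.op r • e)}

/-- The tensor product `M ⊗_{Rᵒᵖ} E`. -/
abbrev NcTensorSwap := TensorProduct ℤ M E ⧸ ncRel' R M E

variable {M E}

/-- The generator `m ⊗ e` of `M ⊗_{Rᵒᵖ} E`. -/
noncomputable def NcTensorSwap.tmul (m : M) (e : E) : NcTensorSwap R M E :=
  Submodule.Quotient.mk (m ⊗ₜ[ℤ] e)

variable (V : Type u) [Quiver.{u} V]

/-- The base of the tensor product `X ⊗_{Qᵒᵖ} Y`. -/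
noncomputable abbrev repTensorSwapBase (X : RepL V R) (Y : RepR V R) : Type u :=
  ⨁ (i : V), NcTensorSwap R (↑(X.obj i)) (↑(Y.obj (op i)))

open scoped Classical in
/-- The relations of the tensor product `X ⊗_{Qᵒᵖ} Y`. -/
noncomputable def repTensorSwapRel (X : RepL V R) (Y : RepR V R) :
    @Submodule ℤ (repTensorSwapBase R V X Y) _ AddCommGroup.toAddCommMonoid _ :=
  Submodule.span ℤ {z | ∃ (j i : V) (a : j ⟶ i) (x : ↑(X.obj j)) (y : ↑(Y.obj (op i))),
    z = DirectSum.of _ i (NcTensorSwap.tmul R (X.map a.toPath x) y)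
      - DirectSum.of _ j (NcTensorSwap.tmul R x (Y.map a.op.toPath y))}

/-- The tensor product `X ⊗_{Qᵒᵖ} Y` of representations, i.e. the tensor product over the
opposite quiver of the opposite ring. -/
noncomputable abbrev RepTensorSwap (X : RepL V R) (Y : RepR V R) : Type u :=
  repTensorSwapBase R V X Y ⧸ repTensorSwapRel R V X Y

end Swap

section Eval

variable {V : Type u} [Quiver.{u} V] {R : Type u} [Ring R]

/-- Evaluation helper identifying the vertex value of `Hom(X, G)` with `Hom_ℤ(X(i), G)`. -/
def homRepEval (X : RepL V R) (G : Type u) [AddCommGroup G] {v : Vᵒᵖ}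
    (s : ↑((HomRepObj V R X G).obj v)) : ↑(X.obj v.unop) →+ G := s

/-- Evaluation helper identifying the vertex value of `Hom(Y, G)` with `Hom_ℤ(Y(i), G)`. -/
def homRepOpEval (Y : RepR V R) (G : Type u) [AddCommGroup G] {i : V}
    (s : ↑((HomRepObjOp V R Y G).obj i)) : ↑(Y.obj (op i)) →+ G := s

end Eval

end QuiverGF

section Statements

open CategoryTheory CategoryTheory.Limits Opposite QuiverGF
open scoped DirectSum

/-
Since `Ext¹(X₃, W₁) = 0`, the pushout of `0 → X₁ → X₂ → X₃ → 0` along `p : X₁ → W₁` splits, so that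
`p` extends to a morphism `h : X₂ → W₁`. Then `(h, u ∘ b) : X₂ → W₁ ⊕ W₃` is the middle component of
a morphism of short exact sequences whose outer components `p` and `u` are monomorphisms. It is
therefore a monomorphism too, and by the nine lemma its cokernel is an extension of `X₃'` by `X₁'`.
-/

namespace QuiverGF

variable {A : Type u} [Category.{v} A] [Abelian A]

theorem shortExact_pushout {S : ShortComplex A} (hS : S.ShortExact) {W : A} (p : S.X₁ ⟶ W) :
    (ShortComplex.mk (pushout.inr S.f p) (pushout.desc S.g 0 (by simp))
      (pushout.inr_desc _ _ _)).ShortExact := by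
  have := hS.mono_f
  have := hS.epi_g
  let π : pushout S.f p ⟶ S.X₃ := pushout.desc S.g 0 (by simp)
  have inl_π : pushout.inl S.f p ≫ π = S.g := pushout.inl_desc _ _ _
  have inr_π : pushout.inr S.f p ≫ π = 0 := pushout.inr_desc _ _ _
  have : Epi π := epi_of_epi_fac inl_π
  have isCokernel : IsColimit (CokernelCofork.ofπ π inr_π) := by
    refine CokernelCofork.IsColimit.ofπ' _ _ fun k hk => ?_
    have hk' : S.f ≫ pushout.inl S.f p ≫ k = 0 := by
      rw [pushout.condition_assoc, hk, comp_zero]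
    refine ⟨hS.exact.desc _ hk', pushout.hom_ext ?_ ?_⟩
    · rw [reassoc_of% inl_π, hS.exact.g_desc]
    · rw [reassoc_of% inr_π, zero_comp, hk]
  exact .mk' (ShortComplex.exact_of_g_is_cokernel _ isCokernel)
    (inferInstanceAs (Mono (pushout.inr S.f p))) ‹_›

theorem ext1Zero.exists_extension {S : ShortComplex A} (hS : S.ShortExact) {W : A}
    (hext : ext1Zero S.X₃ W) (p : S.X₁ ⟶ W) : ∃ h : S.X₂ ⟶ W, S.f ≫ h = p := by
  have hP := shortExact_pushout hS p
  obtain ⟨s, hs⟩ := hext _ _ _ _ hP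
  let σ := ShortComplex.Splitting.ofExactOfSection _ hP.exact s hs hP.mono_f
  have inr_r : pushout.inr S.f p ≫ σ.r = 𝟙 W := σ.f_r
  exact ⟨pushout.inl S.f p ≫ σ.r, by rw [pushout.condition_assoc, inr_r, Category.comp_id]⟩

theorem shortExact_of_map_π {K : ShortComplex (ShortComplex A)}
    (h₁ : (K.map ShortComplex.π₁).ShortExact) (h₂ : (K.map ShortComplex.π₂).ShortExact)
    (h₃ : (K.map ShortComplex.π₃).ShortExact) : K.ShortExact := by
  have isKernel : IsLimit (KernelFork.ofι K.f K.zero) := by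
    apply ShortComplex.isLimitOfIsLimitπ
    exacts [(KernelFork.isLimitMapConeEquiv _ _).symm h₁.fIsKernel,
      (KernelFork.isLimitMapConeEquiv _ _).symm h₂.fIsKernel,
      (KernelFork.isLimitMapConeEquiv _ _).symm h₃.fIsKernel]
  have isCokernel : IsColimit (CokernelCofork.ofπ K.g K.zero) := by
    apply ShortComplex.isColimitOfIsColimitπ
    exacts [(CokernelCofork.isColimitMapCoconeEquiv _ _).symm h₁.gIsCokernel,
      (CokernelCofork.isColimitMapCoconeEquiv _ _).symm h₂.gIsCokernel,
      (CokernelCofork.isColimitMapCoconeEquiv _ _).symm h₃.gIsCokernel]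
  exact .mk' (ShortComplex.exact_of_g_is_cokernel K isCokernel)
    (mono_of_isLimit_fork isKernel) (epi_of_isColimit_cofork isCokernel)

open scoped ZeroObject in
theorem shortExact_X₃_of_shortExact {K : ShortComplex (ShortComplex A)} (hK : K.ShortExact)
    (h₁ : K.X₁.ShortExact) (h₂ : K.X₂.ShortExact) : K.X₃.ShortExact := by
  let S : ShortComplex.SnakeInput A :=
    { L₀ := 0
      L₁ := K.X₁
      L₂ := K.X₂
      L₃ := K.X₃
      v₀₁ := 0
      v₁₂ := K.f
      v₂₃ := K.g
      w₀₂ := zero_comp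
      w₁₃ := K.zero
      h₀ := KernelFork.IsLimit.ofMonoOfIsZero _ hK.mono_f (isZero_zero _)
      h₃ := hK.gIsCokernel
      L₁_exact := h₁.exact
      epi_L₁_g := h₁.epi_g
      L₂_exact := h₂.exact
      mono_L₂_f := h₂.mono_f }
  -- The connecting morphism `S.L₀.X₃ ⟶ S.L₃.X₁` vanishes and is followed exactly by `S.L₃.f`.
  have isZero_L₀_X₃ : IsZero S.L₀.X₃ := (ShortComplex.π₃ (C := A)).map_isZero (isZero_zero _)
  have : Epi S.L₂.g := h₂.epi_g
  have mono_L₃_f : Mono S.L₃.f :=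
    (S.L₂'.exact_iff_mono (isZero_L₀_X₃.eq_of_src _ _)).1 S.L₂'_exact
  exact .mk' S.L₃_exact mono_L₃_f S.epi_L₃_g

theorem exists_shortExact_cokernel_row {S T : ShortComplex A} (hS : S.ShortExact)
    (hT : T.ShortExact) (φ : S ⟶ T) {Z₁ Z₃ : A} {q : T.X₁ ⟶ Z₁} {v : T.X₃ ⟶ Z₃}
    {w₁ : φ.τ₁ ≫ q = 0} {w₃ : φ.τ₃ ≫ v = 0} (h₁ : (ShortComplex.mk φ.τ₁ q w₁).ShortExact)
    (h₃ : (ShortComplex.mk φ.τ₃ v w₃).ShortExact) :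
    ∃ (Z₂ : A) (t : T.X₂ ⟶ Z₂) (c : Z₁ ⟶ Z₂) (d : Z₂ ⟶ Z₃),
      (∃ w : φ.τ₂ ≫ t = 0, (ShortComplex.mk φ.τ₂ t w).ShortExact) ∧
      (∃ w : c ≫ d = 0, (ShortComplex.mk c d w).ShortExact) ∧
      T.f ≫ t = q ≫ c ∧ t ≫ d = T.g ≫ v := by
  have := hS.mono_f
  have := hT.mono_f
  have : Mono φ.τ₁ := h₁.mono_f
  have : Mono φ.τ₃ := h₃.mono_f
  have : Epi q := h₁.epi_g
  have : Mono φ.τ₂ := ShortComplex.mono_τ₂_of_exact_of_mono φ hS.exact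
  have h₂ : (ShortComplex.mk φ.τ₂ (cokernel.π φ.τ₂) (cokernel.condition _)).ShortExact :=
    .mk' (ShortComplex.exact_cokernel _) ‹_› inferInstance
  obtain ⟨c, hc⟩ : ∃ c, q ≫ c = T.f ≫ cokernel.π φ.τ₂ :=
    ⟨h₁.exact.desc _ (by simp [φ.comm₁₂_assoc]), h₁.exact.g_desc _ _⟩
  obtain ⟨d, hd⟩ : ∃ d, cokernel.π φ.τ₂ ≫ d = T.g ≫ v :=
    ⟨cokernel.desc _ (T.g ≫ v) (by simp [φ.comm₂₃_assoc, w₃]), cokernel.π_desc _ _ _⟩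
  have hcd : c ≫ d = 0 := by
    rw [← cancel_epi q, reassoc_of% hc, hd, T.zero_assoc, zero_comp, comp_zero]
  let ψ : T ⟶ ShortComplex.mk c d hcd := ShortComplex.Hom.mk q (cokernel.π φ.τ₂) v hc hd
  have hK : (ShortComplex.mk φ ψ (by ext <;> simp [ψ, w₁, w₃])).ShortExact :=
    shortExact_of_map_π h₁ h₂ h₃
  have hcd' : (ShortComplex.mk c d hcd).ShortExact := shortExact_X₃_of_shortExact hK hS hT
  exact ⟨_, cokernel.π φ.τ₂, c, d, ⟨_, h₂⟩, ⟨hcd, hcd'⟩, hc.symm, hd⟩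

end QuiverGF

theorem stmt10_general {A : Type u} [Category.{v} A] [Abelian A] {X₁ X₂ X₃ W₁ W₃ Z₁ Z₃ : A}
    {a : X₁ ⟶ X₂} {b : X₂ ⟶ X₃} {wab : a ≫ b = 0} (hab : (ShortComplex.mk a b wab).ShortExact)
    {p : X₁ ⟶ W₁} {q : W₁ ⟶ Z₁} {wpq : p ≫ q = 0} (hpq : (ShortComplex.mk p q wpq).ShortExact)
    {u : X₃ ⟶ W₃} {v : W₃ ⟶ Z₃} {wuv : u ≫ v = 0} (huv : (ShortComplex.mk u v wuv).ShortExact)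
    (hext : ext1Zero X₃ W₁) :
    ∃ (Z₂ : A) (s : X₂ ⟶ W₁ ⊞ W₃) (t : W₁ ⊞ W₃ ⟶ Z₂) (c : Z₁ ⟶ Z₂) (d : Z₂ ⟶ Z₃),
      (∃ w : s ≫ t = 0, (ShortComplex.mk s t w).ShortExact) ∧
      (∃ w : c ≫ d = 0, (ShortComplex.mk c d w).ShortExact) ∧
      a ≫ s = p ≫ biprod.inl ∧
      s ≫ biprod.snd = b ≫ u ∧
      biprod.inl ≫ t = q ≫ c ∧
      t ≫ d = biprod.snd ≫ v := by
  obtain ⟨h, hh : a ≫ h = p⟩ := ext1Zero.exists_extension hab hext p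
  let φ : ShortComplex.mk a b wab ⟶
      ShortComplex.mk (biprod.inl : W₁ ⟶ W₁ ⊞ W₃) biprod.snd biprod.inl_snd :=
    { τ₁ := p
      τ₂ := biprod.lift h (b ≫ u)
      τ₃ := u
      comm₁₂ := by ext <;> simp [hh, reassoc_of% wab]
      comm₂₃ := by simp }
  obtain ⟨Z₂, t, c, d, hst, hcd, htc, htd⟩ := exists_shortExact_cokernel_row hab
    (ShortComplex.Splitting.ofHasBinaryBiproduct W₁ W₃).shortExact φ hpq huv
  exact ⟨Z₂, φ.τ₂, t, c, d, hst, hcd, φ.comm₁₂.symm, φ.comm₂₃, htc, htd⟩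

theorem stmt10 (R : Type u) [Ring R] (𝒲 𝒳 : Set (ModuleCat.{u} R))
    (X1 X2 X3 W1 W3 X1' X3' : ModuleCat.{u} R)
    (a : X1 ⟶ X2) (b : X2 ⟶ X3) (wab : a ≫ b = 0) (hab : (ShortComplex.mk a b wab).ShortExact)
    (p : X1 ⟶ W1) (q : W1 ⟶ X1') (wpq : p ≫ q = 0) (hpq : (ShortComplex.mk p q wpq).ShortExact)
    (u : X3 ⟶ W3) (v : W3 ⟶ X3') (wuv : u ≫ v = 0) (huv : (ShortComplex.mk u v wuv).ShortExact)
    (hX1 : X1 ∈ 𝒳) (hX2 : X2 ∈ 𝒳) (hX3 : X3 ∈ 𝒳)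
    (hW1 : W1 ∈ 𝒲) (hW3 : W3 ∈ 𝒲) (hX1' : X1' ∈ 𝒳) (hX3' : X3' ∈ 𝒳)
    (hext : ext1Zero X3 W1) :
    ∃ (X2' : ModuleCat.{u} R) (s : X2 ⟶ W1 ⊞ W3) (t : W1 ⊞ W3 ⟶ X2')
      (c : X1' ⟶ X2') (d : X2' ⟶ X3'),
      (∃ w : s ≫ t = 0, (ShortComplex.mk s t w).ShortExact) ∧
      (∃ w : c ≫ d = 0, (ShortComplex.mk c d w).ShortExact) ∧
      a ≫ s = p ≫ biprod.inl ∧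
      s ≫ biprod.snd = b ≫ u ∧
      biprod.inl ≫ t = q ≫ c ∧
      t ≫ d = biprod.snd ≫ v :=
  stmt10_general hab hpq huv hext

end Statements
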